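/- Let n be an integer with 3 < n < 9. Then every finite 3-subgroup of PGLₙ(ℂ) can be generated by n − 1 elements. -/

import Mathlib

open Matrix

/-- A group `G` can be generated by at most `m` elements. -/
def GeneratedByAtMost (G : Type*) [Group G] (m : ℕ) : Prop :=
  ∃ S : Finset G, S.card ≤ m ∧ Subgroup.closure (S : Set G) = ⊤

theorem IsPGroup.eq_top_of_sup_commutator_eq_top {p : ℕ} [Fact p.Prime] {G : Type*} [Group G]
    [Finite G] (hG : IsPGroup p G) {Q : Subgroup G} (h : Q ⊔ commutator G = ⊤) : Q = ⊤ := by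
  by_contra hQ
  obtain ⟨M, hM, hQM⟩ := (eq_top_or_exists_le_coatom Q).resolve_left hQ
  have := hG.isNilpotent
  have hn : M.Normal :=
    Subgroup.NormalizerCondition.normal_of_coatom M Group.normalizerCondition_of_isNilpotent hM
  have hc : commutator G ≤ M := by
    have : Nontrivial (G ⧸ M) := QuotientGroup.nontrivial_iff.2 hM.1
    have h1 : M < Subgroup.comap (QuotientGroup.mk' M) (Subgroup.center (G ⧸ M)) := by
      have h0 := Subgroup.nontrivial_iff_ne_bot _ |>.1
        (hG.to_quotient M).center_nontrivial
      refine lt_of_le_of_ne (QuotientGroup.le_comap_mk' M _) fun h => h0 ?_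
      have := congrArg (Subgroup.map (QuotientGroup.mk' M)) h
      rw [Subgroup.map_comap_eq_self_of_surjective (QuotientGroup.mk'_surjective M)] at this
      rw [← this]; simp
    have h2 := hM.2 _ h1
    rw [commutator_def, Subgroup.commutator_le]
    intro a _ b _
    have ha : a ∈ Subgroup.comap (QuotientGroup.mk' M) (Subgroup.center (G ⧸ M)) := h2 ▸ trivial
    rw [← QuotientGroup.eq_one_iff, commutatorElement_def]
    have := Subgroup.mem_center_iff.1 (Subgroup.mem_comap.1 ha) (QuotientGroup.mk' M b)
    simp only [QuotientGroup.mk'_apply] at this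
    change (a : G ⧸ M) * b * (a : G ⧸ M)⁻¹ * (b : G ⧸ M)⁻¹ = 1
    rw [← this]; group
  exact hM.1 (top_unique (h ▸ sup_le hQM hc))

variable {G : Type*} [Group G] {V : Type*} [AddCommGroup V] [Module ℂ V]
/-- The elements of `G` acting on the submodule `W` through a scalar. -/
def scalarOn (ρ : G →* Module.End ℂ V) (W : Submodule ℂ V) : Subgroup G where
  carrier := {g | ∃ c : ℂˣ, ∀ w ∈ W, ρ g w = c • w}
  one_mem' := ⟨1, by simp⟩
  mul_mem' := by
    rintro a b ⟨c, hc⟩ ⟨d, hd⟩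
    refine ⟨c * d, fun w hw => ?_⟩
    rw [map_mul, Module.End.mul_apply, hd w hw, Units.smul_def, map_smul, hc w hw, mul_comm,
      mul_smul]
    rfl
  inv_mem' := by
    rintro a ⟨c, hc⟩
    refine ⟨c⁻¹, fun w hw => ?_⟩
    rw [eq_inv_smul_iff, Units.smul_def, ← map_smul, ← Units.smul_def, ← hc w hw,
      ← Module.End.mul_apply, ← map_mul]
    simp

theorem mem_scalarOn {ρ : G →* Module.End ℂ V} {W : Submodule ℂ V} {g : G} :
    g ∈ scalarOn ρ W ↔ ∃ c : ℂˣ, ∀ w ∈ W, ρ g w = c • w := Iff.rfl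

theorem scalarOn_normal (ρ : G →* Module.End ℂ V) (W : Submodule ℂ V)
    (hW : ∀ g, ∀ w ∈ W, ρ g w ∈ W) : (scalarOn ρ W).Normal := by
  refine ⟨fun k ⟨c, hc⟩ g => ⟨c, fun w hw => ?_⟩⟩
  rw [map_mul, map_mul, Module.End.mul_apply, Module.End.mul_apply, hc _ (hW _ _ hw),
    Units.smul_def, map_smul, ← Module.End.mul_apply, ← map_mul]
  simp [Units.smul_def]

/-- A common eigenvector yields a linear character. -/
theorem exists_character (ρ : G →* Module.End ℂ V) {v : V} (hv : v ≠ 0)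
    (h : ∀ g, ∃ c : ℂ, ρ g v = c • v) : ∃ χ : G →* ℂˣ, ∀ g, ρ g v = χ g • v := by
  choose c hc using h
  let f : G →* ℂ :=
    { toFun := c
      map_one' := smul_left_injective ℂ hv (by simp [← hc])
      map_mul' := fun a b => smul_left_injective ℂ hv (by
        simp only [← hc, map_mul, Module.End.mul_apply, mul_smul]
        rw [hc b, map_smul, hc a, smul_comm]) }
  exact ⟨f.toHomUnits, fun g => hc g⟩

/-- If `z` is central modulo scalars, the commutation scalars form a linear character. -/
theorem exists_commutation_character [Nontrivial V] (ρ : G →* Module.End ℂ V) (z : G)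
    (h : ∀ g, g * z * g⁻¹ * z⁻¹ ∈ scalarOn ρ ⊤) :
    ∃ ζ : G →* ℂˣ, ∀ g v, ρ g (ρ z v) = ζ g • ρ z (ρ g v) := by
  choose c hc using h
  have hc' (g : G) (v : V) : ρ g (ρ z v) = c g • ρ z (ρ g v) := by
    rw [← hc g _ trivial]
    simp only [← Module.End.mul_apply, ← map_mul]
    congr 2; group
  obtain ⟨v, hv⟩ := exists_ne (0 : V)
  have hinj (g : G) (w : V) (hw : ρ g w = 0) : w = 0 := by
    have := congrArg (ρ g⁻¹) hw
    rw [← Module.End.mul_apply, ← map_mul] at this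
    simpa using this
  have huniq (g : G) (d : ℂˣ) (hd : ρ g (ρ z v) = d • ρ z (ρ g v)) : c g = d := by
    have hne : ρ z (ρ g v) ≠ 0 := fun h0 => hv (hinj _ _ (hinj _ _ h0))
    rw [hc'] at hd
    exact Units.ext (smul_left_injective ℂ hne hd)
  refine ⟨⟨⟨c, huniq 1 1 (by simp)⟩, fun a b => huniq _ _ ?_⟩, hc'⟩
  rw [map_mul, Module.End.mul_apply, hc', Units.smul_def, map_smul, hc', mul_comm, mul_smul]
  rfl

/-- The restriction of a representation to an invariant submodule. -/
def restrictRep (ρ : G →* Module.End ℂ V) (W : Submodule ℂ V) (hW : ∀ g, ∀ w ∈ W, ρ g w ∈ W) :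
    G →* Module.End ℂ W where
  toFun g := (ρ g).restrict (hW g)
  map_one' := by ext; simp
  map_mul' a b := by ext; simp

@[simp] theorem coe_restrictRep_apply (ρ : G →* Module.End ℂ V) (W : Submodule ℂ V)
    (hW : ∀ g, ∀ w ∈ W, ρ g w ∈ W) (g : G) (w : W) :
    (restrictRep ρ W hW g w : V) = ρ g w := rfl

theorem rep_injective (ρ : G →* Module.End ℂ V) (g : G) : Function.Injective (ρ g) := by
  refine Function.LeftInverse.injective (g := ρ g⁻¹) fun v => ?_
  rw [← Module.End.mul_apply, ← map_mul]
  simp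

theorem iSupIndep.sum_finrank_le [FiniteDimensional ℂ V] {ι : Type*} [Fintype ι]
    {p : ι → Submodule ℂ V} (hp : iSupIndep p) :
    ∑ i, Module.finrank ℂ (p i) ≤ Module.finrank ℂ V := by
  classical
  rw [← Module.finrank_directSum]
  exact LinearMap.finrank_le_finrank_of_injective
    (f := DFinsupp.lsum ℕ fun i => (p i).subtype) hp.dfinsupp_lsum_injective

theorem map_mem_eigenspace {ρ : G →* Module.End ℂ V} {z : G} {ζ : G →* ℂˣ}
    (hζ : ∀ g v, ρ g (ρ z v) = ζ g • ρ z (ρ g v)) {μ : ℂ} (g : G) {w : V}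
    (hw : w ∈ (ρ z).eigenspace μ) :
    ρ g w ∈ (ρ z).eigenspace (((ζ g)⁻¹ : ℂˣ) * μ) := by
  rw [Module.End.mem_eigenspace_iff] at hw ⊢
  rw [mul_smul, ← Units.smul_def, eq_inv_smul_iff, ← hζ, hw, map_smul]

theorem card_range_mul_finrank_eigenspace_le [FiniteDimensional ℂ V] {ρ : G →* Module.End ℂ V}
    {z : G} {ζ : G →* ℂˣ} (hζ : ∀ g v, ρ g (ρ z v) = ζ g • ρ z (ρ g v)) [Finite ζ.range]
    {μ : ℂ} (hμ : μ ≠ 0) :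
    Nat.card ζ.range * Module.finrank ℂ ((ρ z).eigenspace μ) ≤ Module.finrank ℂ V := by
  have := Fintype.ofFinite ζ.range
  have hind := (ρ z).eigenspaces_iSupIndep.comp
    (f := fun u : ζ.range => (((u : ℂˣ)⁻¹ : ℂˣ) : ℂ) * μ) fun a b hab =>
      Subtype.ext (inv_injective (Units.ext (mul_right_cancel₀ hμ hab)))
  refine le_trans ?_ hind.sum_finrank_le
  rw [Nat.card_eq_fintype_card, ← smul_eq_mul, ← Finset.card_univ, ← Finset.sum_const]
  refine Finset.sum_le_sum ?_
  rintro ⟨_, g, rfl⟩ -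
  exact LinearMap.finrank_le_finrank_of_injective
    (f := (ρ g).restrict fun w hw => map_mem_eigenspace hζ g hw)
    fun a b hab => Subtype.ext (rep_injective ρ g (congrArg Subtype.val hab))

/-- A `p`-group not acting by scalars has a nonscalar element that is central modulo scalars. -/
theorem exists_central_mod_scalars [Finite G] {p : ℕ} [Fact p.Prime] (hG : IsPGroup p G)
    (ρ : G →* Module.End ℂ V) (h : scalarOn ρ ⊤ ≠ ⊤) :
    ∃ z ∉ scalarOn ρ ⊤, ∀ g, g * z * g⁻¹ * z⁻¹ ∈ scalarOn ρ ⊤ := by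
  have hN := scalarOn_normal ρ ⊤ (fun _ _ _ => trivial)
  have : Nontrivial (G ⧸ scalarOn ρ ⊤) := QuotientGroup.nontrivial_iff.2 h
  have := (hG.to_quotient (scalarOn ρ ⊤)).center_nontrivial
  obtain ⟨⟨z, hz⟩, hz1⟩ := exists_ne (1 : Subgroup.center (G ⧸ scalarOn ρ ⊤))
  obtain ⟨z, rfl⟩ := QuotientGroup.mk_surjective z
  refine ⟨z, fun h => hz1 (Subtype.ext ((QuotientGroup.eq_one_iff z).2 h)), fun g => ?_⟩
  rw [← QuotientGroup.eq_one_iff]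
  change (g : G ⧸ scalarOn ρ ⊤) * z * (g : G ⧸ scalarOn ρ ⊤)⁻¹ * (z : G ⧸ scalarOn ρ ⊤)⁻¹ = 1
  rw [Subgroup.mem_center_iff.1 hz]; group

section Triple

variable {ρ : G →* Module.End ℂ V} {N : Subgroup G} {g : G} {v : V}

/-- The span of the first three translates of `v` under the powers of `g`. -/
def tripleSpan (ρ : G →* Module.End ℂ V) (g : G) (v : V) : Submodule ℂ V :=
  Submodule.span ℂ (Set.range fun i : Fin 3 => ρ (g ^ (i : ℕ)) v)

/-- The map sending a triple to the successive ratios of its entries, in cyclic order. -/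
def cyclicRatio : ℂˣ × ℂˣ × ℂˣ →* ℂˣ × ℂˣ × ℂˣ where
  toFun x := (x.2.1 / x.1, x.2.2 / x.2.1, x.1 / x.2.2)
  map_one' := by simp
  map_mul' x y := by simp [mul_div_mul_comm]

/-- A finite group of triples with product one that is stable under cyclic ratios is generated by
one element modulo cyclic ratios. -/
theorem exists_generator_mod_cyclicRatio (B : Subgroup (ℂˣ × ℂˣ × ℂˣ)) [Finite B]
    (hprod : ∀ x ∈ B, x.1 * x.2.1 * x.2.2 = 1) (hB : ∀ x ∈ B, cyclicRatio x ∈ B) :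
    ∃ t ∈ B, ∀ x ∈ B, ∃ m : ℤ, ∃ y ∈ B, x = t ^ m * cyclicRatio y := by
  let δ : B →* B := (cyclicRatio.comp B.subtype).codRestrict B fun x => hB x x.2
  have hker : Nat.card δ.ker ≤ 3 := by
    rw [← Complex.card_rootsOfUnity 3]
    have heq (x : δ.ker) : (x : B).1.2.1 = (x : B).1.1 ∧ (x : B).1.2.2 = (x : B).1.2.1 := by
      have h := congrArg Subtype.val x.2
      exact ⟨div_eq_one.1 (congrArg (fun a => a.1) h), div_eq_one.1 (congrArg (fun a => a.2.1) h)⟩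
    refine Nat.card_le_card_of_injective
      (fun x : δ.ker => (⟨(x : B).1.1, ?_⟩ : rootsOfUnity 3 ℂ)) fun x y hxy => ?_
    · have := hprod _ (x : B).2
      rw [(heq x).2, (heq x).1] at this
      rw [mem_rootsOfUnity, ← this, pow_three, mul_assoc]
    · have h1 : (x : B).1.1 = (y : B).1.1 := congrArg Subtype.val hxy
      refine Subtype.ext (Subtype.ext (Prod.ext h1 (Prod.ext ?_ ?_)))
      · rw [(heq x).1, (heq y).1, h1]
      · rw [(heq x).2, (heq x).1, (heq y).2, (heq y).1, h1]
  rw [← Subgroup.index_range, Subgroup.index] at hker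
  have : IsCyclic (B ⧸ δ.range) := by
    have hpos : 0 < Nat.card (B ⧸ δ.range) := Nat.card_pos
    interval_cases h : Nat.card (B ⧸ δ.range)
    · exact isCyclic_of_card_dvd_prime (p := 2) (by simp [h])
    · exact isCyclic_of_prime_card (p := 2) h
    · exact isCyclic_of_prime_card (p := 3) (hp := ⟨Nat.prime_three⟩) h
  obtain ⟨t, ht⟩ := IsCyclic.exists_generator (α := B ⧸ δ.range)
  obtain ⟨t, rfl⟩ := QuotientGroup.mk_surjective t
  refine ⟨t, t.2, fun x hx => ?_⟩
  obtain ⟨m, hm⟩ := ht ((⟨x, hx⟩ : B) : B ⧸ δ.range)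
  obtain ⟨y, hy⟩ := QuotientGroup.eq.1 ((QuotientGroup.mk_zpow _ t m).trans hm)
  refine ⟨m, y, y.2, ?_⟩
  exact congrArg Subtype.val (eq_mul_of_inv_mul_eq hy.symm)

theorem exists_generator_mod_scalarOn [Finite G] {p : ℕ} [Fact p.Prime] (hG : IsPGroup p G)
    (hN : N.Normal) (hg3 : g ^ 3 ∈ N) (htop : N ⊔ Subgroup.zpowers g = ⊤)
    (hv : ∀ h ∈ N, ∃ c : ℂ, ρ h v = c • v) (hv0 : v ≠ 0) :
    ∃ t, Subgroup.closure {g, t} ⊔ scalarOn ρ (tripleSpan ρ g v) = ⊤ := by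
  obtain ⟨χ, hχ⟩ := exists_character (ρ.comp N.subtype) hv0 fun h => hv h h.2
  let a (i : ℕ) : N →* ℂˣ := χ.comp (MulAut.conjNormal (g ^ i)⁻¹).toMonoidHom
  have ha (i : ℕ) (h : N) : ρ h (ρ (g ^ i) v) = a i h • ρ (g ^ i) v := by
    rw [Units.smul_def, ← map_smul, ← Units.smul_def]
    have := hχ (MulAut.conjNormal (g ^ i)⁻¹ h)
    change _ = ρ (g ^ i) (χ (MulAut.conjNormal (g ^ i)⁻¹ h) • v)
    rw [← this]
    simp only [MonoidHom.comp_apply, Subgroup.subtype_apply, MulAut.conjNormal_apply,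
      ← Module.End.mul_apply, ← map_mul]
    congr 2; group
  have hshift (i : ℕ) (h : N) : a i (MulAut.conjNormal g⁻¹ h) = a (i + 1) h := by
    change χ _ = χ _
    congr 1
    ext
    simp only [MulAut.conjNormal_apply, MulEquiv.coe_toMonoidHom]
    rw [pow_succ']; group
  have h3 (h : N) : a 3 h = a 0 h := by
    have h1 : MulAut.conjNormal (g ^ 3)⁻¹ h = (⟨g ^ 3, hg3⟩ : N)⁻¹ * h * ⟨g ^ 3, hg3⟩ :=
      Subtype.ext (by rw [MulAut.conjNormal_apply, inv_inv]; rfl)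
    have h2 : MulAut.conjNormal (g ^ 0)⁻¹ h = h :=
      Subtype.ext (by rw [MulAut.conjNormal_apply]; simp)
    change χ (MulAut.conjNormal (g ^ 3)⁻¹ h) = χ (MulAut.conjNormal (g ^ 0)⁻¹ h)
    rw [h1, h2]
    simp [mul_comm, mul_assoc]
  let α : N →* ℂˣ × ℂˣ × ℂˣ := cyclicRatio.comp ((a 0).prod ((a 1).prod (a 2)))
  have hα (h : N) : cyclicRatio (α h) = α (MulAut.conjNormal g⁻¹ h * h⁻¹) := by
    have hdiv (i : ℕ) : a i (MulAut.conjNormal g⁻¹ h * h⁻¹) = a (i + 1) h / a i h := by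
      rw [map_mul, hshift, map_inv, div_eq_mul_inv]
    refine congrArg cyclicRatio (Prod.ext (hdiv 0).symm (Prod.ext (hdiv 1).symm ?_))
    exact (congrArg (· / a 2 h) (h3 h).symm).trans (hdiv 2).symm
  have hscal (k : N) (hk : α k = 1) : (k : G) ∈ scalarOn ρ (tripleSpan ρ g v) := by
    have h1 : a 1 k = a 0 k := div_eq_one.1 (congrArg (fun x => x.1) hk)
    have h2 : a 2 k = a 1 k := div_eq_one.1 (congrArg (fun x => x.2.1) hk)
    refine ⟨a 0 k, fun w hw => ?_⟩
    suffices hle : tripleSpan ρ g v ≤ (ρ k).eigenspace (a 0 k) from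
      Module.End.mem_eigenspace_iff.1 (hle hw)
    rw [tripleSpan, Submodule.span_le]
    rintro _ ⟨i, rfl⟩
    refine Module.End.mem_eigenspace_iff.2 ((ha i k).trans ?_)
    have : a i k = a 0 k := by fin_cases i <;> simp [h1, h2]
    rw [this]; rfl
  have : Finite α.range := (Set.finite_range α).to_subtype
  obtain ⟨_, ⟨t, rfl⟩, ht⟩ := exists_generator_mod_cyclicRatio α.range
    (by rintro _ ⟨h, rfl⟩; simp [α, cyclicRatio])
    (by rintro _ ⟨h, rfl⟩; exact ⟨_, (hα h).symm⟩)
  refine ⟨t, hG.eq_top_of_sup_commutator_eq_top ?_⟩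
  set Q := Subgroup.closure {g, (t : G)} ⊔ scalarOn ρ (tripleSpan ρ g v) with hQ
  have hgQ : g ∈ Q ⊔ commutator G := Subgroup.mem_sup_left (Subgroup.mem_sup_left
    (Subgroup.subset_closure (by simp)))
  have htQ : (t : G) ∈ Q ⊔ commutator G := Subgroup.mem_sup_left (Subgroup.mem_sup_left
    (Subgroup.subset_closure (by simp)))
  rw [eq_top_iff, ← htop, sup_le_iff, Subgroup.zpowers_le]
  refine ⟨fun h hh => ?_, hgQ⟩
  obtain ⟨m, _, ⟨y, rfl⟩, hy⟩ := ht _ ⟨⟨h, hh⟩, rfl⟩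
  set u : N := t ^ m * (MulAut.conjNormal g⁻¹ y * y⁻¹) with hu
  have hk : ((u⁻¹ * ⟨h, hh⟩ : N) : G) ∈ scalarOn ρ (tripleSpan ρ g v) := by
    apply hscal
    rw [hα, ← map_zpow, ← map_mul] at hy
    rw [map_mul, map_inv, hy, inv_mul_cancel]
  have huQ : (u : G) ∈ Q ⊔ commutator G := by
    refine mul_mem (by simpa using zpow_mem htQ m) (Subgroup.mem_sup_right ?_)
    have := Subgroup.commutator_mem_commutator (Subgroup.mem_top g⁻¹) (Subgroup.mem_top (y : G))
    rw [commutator_def]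
    simpa [commutatorElement_def] using this
  have := mul_mem huQ (Subgroup.mem_sup_left (Subgroup.mem_sup_right hk) : _ ∈ Q ⊔ commutator G)
  simpa using this

end Triple

universe u v

/-- A nonzero representation of dimension at most eight of a `3`-group has an invariant line, or an
invariant subspace spanned by three lines that are permuted cyclically. -/
theorem exists_eigenvector_or_triple (n : ℕ) (h0 : 0 < n) (h9 : n < 9) :
    ∀ (G : Type u) [Group G] [Finite G], IsPGroup 3 G →
    ∀ (V : Type v) [AddCommGroup V] [Module ℂ V] [FiniteDimensional ℂ V]
      (ρ : G →* Module.End ℂ V), Module.finrank ℂ V = n →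
    (∃ v : V, v ≠ 0 ∧ ∀ g, ∃ c : ℂ, ρ g v = c • v) ∨
    ∃ (N : Subgroup G) (g : G) (v : V), N.Normal ∧ g ^ 3 ∈ N ∧ N ⊔ Subgroup.zpowers g = ⊤ ∧
      (∀ h ∈ N, ∃ c : ℂ, ρ h v = c • v) ∧
        LinearIndependent ℂ (fun i : Fin 3 => ρ (g ^ (i : ℕ)) v) := by
  induction n using Nat.strong_induction_on with
  | _ n ih =>
  intro G _ _ hG V _ _ _ ρ hn
  have : Fact (Nat.Prime 3) := ⟨Nat.prime_three⟩
  have hVn : Nontrivial V := Module.nontrivial_of_finrank_pos (R := ℂ) (by omega)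
  by_cases hs : scalarOn ρ ⊤ = ⊤
  · obtain ⟨v, hv⟩ := exists_ne (0 : V)
    refine Or.inl ⟨v, hv, fun g => ?_⟩
    obtain ⟨c, hc⟩ := mem_scalarOn.1 (hs ▸ trivial : g ∈ scalarOn ρ ⊤)
    exact ⟨c, hc v trivial⟩
  obtain ⟨z, hz, hzc⟩ := exists_central_mod_scalars hG ρ hs
  obtain ⟨ζ, hζ⟩ := exists_commutation_character ρ z hzc
  obtain ⟨μ, hμ⟩ := Module.End.exists_eigenvalue (ρ z)
  set E := (ρ z).eigenspace μ with hE
  have hEbot : E ≠ ⊥ := hμ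
  have hEpos : 0 < Module.finrank ℂ E := by
    rwa [Nat.pos_iff_ne_zero, Ne, Submodule.finrank_eq_zero]
  have hμ0 : μ ≠ 0 := by
    rintro rfl
    refine hEbot ((Submodule.eq_bot_iff _).2 fun w hw => rep_injective ρ z ?_)
    simpa [hE] using hw
  have hElt : Module.finrank ℂ E < n := by
    rw [← hn]
    refine Submodule.finrank_lt fun hEt => hz ⟨Units.mk0 μ hμ0, fun w _ => ?_⟩
    exact Module.End.mem_eigenspace_iff.1 (hEt ▸ trivial : w ∈ E)
  have : Finite ζ.range := (Set.finite_range ζ).to_subtype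
  have hcard := card_range_mul_finrank_eigenspace_le hζ hμ0
  rw [← hE, hn] at hcard
  have hker (g : G) (hg : ζ g = 1) (w : V) (hw : w ∈ E) : ρ g w ∈ E := by
    have := map_mem_eigenspace hζ g hw
    rwa [hg, inv_one, Units.val_one, one_mul] at this
  obtain ⟨k, hk⟩ := IsPGroup.iff_card.1
    (hG.of_surjective ζ.rangeRestrict ζ.rangeRestrict_surjective)
  rw [hk] at hcard
  match k, hk, hcard with
  | 0, hk, _ =>
    have hζ1 (g : G) : ζ g = 1 := by
      have := Subgroup.eq_bot_of_card_eq _ hk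
      exact (Subgroup.eq_bot_iff_forall _).1 this _ ⟨g, rfl⟩
    rcases ih _ hElt hEpos (by omega) G hG E
      (restrictRep ρ E fun g w hw => hker g (hζ1 g) w hw) rfl with
      ⟨v, hv, h⟩ | ⟨N, g, v, hN, hg3, htop, hv, hli⟩
    · exact Or.inl ⟨v, by simpa using hv, fun g => (h g).imp fun c hc => congrArg Subtype.val hc⟩
    · refine Or.inr ⟨N, g, v, hN, hg3, htop,
        fun h hh => (hv h hh).imp fun c hc => congrArg Subtype.val hc, ?_⟩
      exact hli.map' E.subtype (Submodule.ker_subtype E)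
  | 1, hk, hcard =>
    have hK (g : ζ.ker) (w : V) (hw : w ∈ E) : ρ g w ∈ E := hker g g.2 w hw
    rcases ih _ hElt hEpos (by omega) ζ.ker (hG.to_subgroup _) E
      (restrictRep (ρ.comp ζ.ker.subtype) E hK) rfl with
      ⟨v, hv, h⟩ | ⟨_, _, _, -, -, -, -, hli⟩
    · obtain ⟨g, hg⟩ : ∃ g, ζ g ≠ 1 := by
        by_contra! hall
        have : ζ.range = ⊥ := by rw [eq_bot_iff]; rintro _ ⟨g, rfl⟩; exact hall g
        rw [this] at hk
        simp at hk
      have hg3 : ζ g ^ 3 = 1 := by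
        have := pow_card_eq_one' (x := (⟨ζ g, g, rfl⟩ : ζ.range))
        rw [hk] at this
        simpa [Subtype.ext_iff] using this
      refine Or.inr ⟨ζ.ker, g, v, inferInstance, by rw [MonoidHom.mem_ker, map_pow, hg3], ?_,
        fun k hk => (h ⟨k, hk⟩).imp fun c hc => congrArg Subtype.val hc, ?_⟩
      · rw [eq_top_iff]
        intro x _
        obtain ⟨m, hm⟩ := Subgroup.mem_zpowers_iff.1 (mem_zpowers_of_prime_card
          (p := 3) (by simpa using hk) (g := (⟨ζ g, g, rfl⟩ : ζ.range))
          (g' := (⟨ζ x, x, rfl⟩ : ζ.range)) (by simpa [Subtype.ext_iff] using hg))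
        have hm' : ζ g ^ m = ζ x := congrArg Subtype.val hm
        have hx : x * (g ^ m)⁻¹ ∈ ζ.ker := by
          rw [MonoidHom.mem_ker, map_mul, map_inv, map_zpow, hm', mul_inv_cancel]
        simpa using Subgroup.mul_mem_sup hx (Subgroup.zpow_mem_zpowers g m)
      · have hv0 : (v : V) ≠ 0 := by simpa using hv
        have hvec (i : Fin 3) :
            (ρ z).HasEigenvector (((ζ (g ^ (i : ℕ)))⁻¹ : ℂˣ) * μ) (ρ (g ^ (i : ℕ)) v) :=
          ⟨map_mem_eigenspace hζ _ v.2,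
            fun h => hv0 (rep_injective ρ _ (h.trans (map_zero _).symm))⟩
        exact Module.End.eigenvectors_linearIndependent' (ρ z) _ (fun i j hij => by
          have h1 := inv_injective (Units.ext (mul_right_cancel₀ hμ0 hij))
          rw [map_pow, map_pow] at h1
          have hord : orderOf (ζ g) = 3 := orderOf_eq_prime hg3 hg
          exact Fin.ext (pow_injOn_Iio_orderOf (by simp [hord]) (by simp [hord]) h1)) _ hvec
    · have := hli.fintype_card_le_finrank
      simp at this
      omega
  | k + 2, hk, hcard =>
    have : 1 ≤ 3 ^ k := Nat.one_le_pow _ _ (by norm_num)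
    rw [pow_add] at hcard
    nlinarith

theorem exists_finset_sup_ker_eq_top [Finite G] [Nontrivial V] (ρ : G →* Module.End ℂ V)
    (S : Finset G) (hS : Subgroup.closure (S : Set G) ⊔ scalarOn ρ ⊤ = ⊤) :
    ∃ T : Finset G, T.card ≤ S.card + 1 ∧ Subgroup.closure (T : Set G) ⊔ ρ.ker = ⊤ := by
  classical
  obtain ⟨v, hv⟩ := exists_ne (0 : V)
  obtain ⟨χ, hχ⟩ := exists_character (ρ.comp (scalarOn ρ ⊤).subtype) hv fun g =>
    let ⟨c, hc⟩ := g.2; ⟨c, hc v trivial⟩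
  have : Finite χ.range := (Set.finite_range χ).to_subtype
  obtain ⟨⟨_, t, rfl⟩, ht⟩ := IsCyclic.exists_generator (α := χ.range)
  refine ⟨insert (t : G) S, Finset.card_insert_le _ _, ?_⟩
  rw [eq_top_iff, ← hS, sup_le_iff]
  refine ⟨le_sup_of_le_left (Subgroup.closure_mono (by simp)), fun s hs => ?_⟩
  obtain ⟨m, hm⟩ := ht ⟨_, ⟨s, hs⟩, rfl⟩
  have hm' : χ t ^ m = χ ⟨s, hs⟩ := congrArg Subtype.val hm
  set u : scalarOn ρ ⊤ := (t ^ m)⁻¹ * ⟨s, hs⟩ with hu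
  have hu1 : χ u = 1 := by rw [hu, map_mul, map_inv, map_zpow, hm', inv_mul_cancel]
  have hker : (u : G) ∈ ρ.ker := by
    obtain ⟨c, hc⟩ := u.2
    have hc1 : c = 1 := by
      have h1 := hχ u
      rw [hu1, one_smul] at h1
      refine Units.ext (smul_left_injective ℂ hv ?_)
      exact (hc v trivial).symm.trans (by simpa using h1)
    rw [MonoidHom.mem_ker]
    ext w
    simpa [hc1] using hc w trivial
  have htm : (t : G) ^ m ∈ Subgroup.closure ((insert (t : G) S : Finset G) : Set G) :=
    zpow_mem (Subgroup.subset_closure (by simp)) m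
  simpa [hu] using Subgroup.mul_mem_sup htm hker

/-- An endomorphism of finite order acting trivially on a submodule and its quotient is trivial. -/
theorem eq_one_of_pow_eq_one_of_sub_mem {T : Module.End ℂ V} {W : Submodule ℂ V} {m : ℕ}
    (hm : m ≠ 0) (hT : T ^ m = 1) (hW : ∀ w ∈ W, T w = w) (hQ : ∀ u, T u - u ∈ W) : T = 1 := by
  have key (u : V) (i : ℕ) : (T ^ i) u = u + i • (T u - u) := by
    induction i with
    | zero => simp
    | succ i ih =>
      rw [pow_succ', Module.End.mul_apply, ih, map_add, map_nsmul, hW _ (hQ u), succ_nsmul]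
      abel
  ext u
  have h := key u m
  rw [hT, Module.End.one_apply, left_eq_add, ← Nat.cast_smul_eq_nsmul ℂ, smul_eq_zero,
    Nat.cast_eq_zero, or_iff_right hm, sub_eq_zero] at h
  simpa using h

/-- The representation induced on the quotient by an invariant submodule. -/
def quotientRep (ρ : G →* Module.End ℂ V) (W : Submodule ℂ V) (hW : ∀ g, ∀ w ∈ W, ρ g w ∈ W) :
    G →* Module.End ℂ (V ⧸ W) where
  toFun g := W.mapQ W (ρ g) (hW g)
  map_one' := by ext; simp
  map_mul' a b := by ext; simp

/-- The twist of a representation by a linear character. -/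
def twistRep (χ : G →* ℂˣ) (ρ : G →* Module.End ℂ V) : G →* Module.End ℂ V where
  toFun g := χ g • ρ g
  map_one' := by simp
  map_mul' a b := by simp [smul_mul_smul_comm]

theorem exists_finset_sup_scalarOn_top_of_quotient [Finite G] {ρ : G →* Module.End ℂ V}
    {W : Submodule ℂ V} {v : V} (hvW : v ∈ W) (hv : v ≠ 0) {m : ℕ}
    (S : Finset G) (hS : Subgroup.closure (S : Set G) ⊔ scalarOn ρ W = ⊤)
    (hquot : ∀ (K : Subgroup G) (σ : K →* Module.End ℂ (V ⧸ W)), ∃ T : Finset K, T.card ≤ m ∧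
      Subgroup.closure (T : Set K) ⊔ σ.ker = ⊤) :
    ∃ T : Finset G, T.card ≤ S.card + m ∧ Subgroup.closure (T : Set G) ⊔ scalarOn ρ ⊤ = ⊤ := by
  classical
  set K := scalarOn ρ W with hK
  obtain ⟨χ, hχ⟩ := exists_character (ρ.comp K.subtype) hv fun g =>
    let ⟨c, hc⟩ := g.2; ⟨c, hc v hvW⟩
  have hχW (k : K) (w : V) (hw : w ∈ W) : ρ k w = χ k • w := by
    obtain ⟨c, hc⟩ := k.2
    have : c = χ k :=
      Units.ext (smul_left_injective ℂ hv ((hc v hvW).symm.trans (hχ k)))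
    rw [hc w hw, this]
  let τ := twistRep χ⁻¹ (ρ.comp K.subtype)
  have hτ (k : K) (u : V) : τ k u = (χ k)⁻¹ • ρ k u := rfl
  have hτW (k : K) (w : V) (hw : w ∈ W) : τ k w = w := by
    rw [hτ, hχW k w hw, inv_smul_smul]
  obtain ⟨T, hTm, hT⟩ := hquot K
    (quotientRep τ W fun k w hw => (hτW k w hw).symm ▸ hw)
  have hker (k : K) (hk : k ∈ (quotientRep τ W fun k w hw => (hτW k w hw).symm ▸ hw).ker) :
      (k : G) ∈ scalarOn ρ ⊤ := by
    have h1 : τ k = 1 := by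
      refine eq_one_of_pow_eq_one_of_sub_mem (orderOf_pos k).ne'
        (by rw [← map_pow, pow_orderOf_eq_one, map_one]) (hτW k) fun u => ?_
      exact (Submodule.Quotient.eq W).1 (LinearMap.congr_fun hk (Submodule.Quotient.mk u))
    refine ⟨χ k, fun u _ => ?_⟩
    rw [← inv_smul_eq_iff, ← hτ, h1, Module.End.one_apply]
  refine ⟨S ∪ T.image (↑), (Finset.card_union_le _ _).trans
    (Nat.add_le_add_left (Finset.card_image_le.trans hTm) _), ?_⟩
  rw [eq_top_iff, ← hS, sup_le_iff]
  refine ⟨le_sup_of_le_left (Subgroup.closure_mono (by simp)), fun k hk => ?_⟩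
  have hmap : Subgroup.map K.subtype (Subgroup.closure (T : Set K) ⊔
      (quotientRep τ W fun k w hw => (hτW k w hw).symm ▸ hw).ker) ≤
      Subgroup.closure ((S ∪ T.image (↑) : Finset G) : Set G) ⊔ scalarOn ρ ⊤ := by
    rw [Subgroup.map_sup, MonoidHom.map_closure]
    refine sup_le_sup (Subgroup.closure_mono (by simp)) ?_
    rintro _ ⟨x, hx, rfl⟩
    exact hker x hx
  exact hmap ⟨⟨k, hk⟩, hT ▸ trivial, rfl⟩

theorem exists_finset_sup_scalarOn_top (n : ℕ) (h0 : 0 < n) (h9 : n < 9) :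
    ∀ (G : Type u) [Group G] [Finite G], IsPGroup 3 G →
    ∀ (V : Type v) [AddCommGroup V] [Module ℂ V] [FiniteDimensional ℂ V]
      (ρ : G →* Module.End ℂ V), Module.finrank ℂ V = n →
    ∃ S : Finset G, S.card ≤ n - 1 ∧
      Subgroup.closure (S : Set G) ⊔ scalarOn ρ ⊤ = ⊤ := by
  classical
  induction n using Nat.strong_induction_on with
  | _ n ih =>
  intro G _ _ hG V _ _ _ ρ hn
  have : Fact (Nat.Prime 3) := ⟨Nat.prime_three⟩
  have hquot (W : Submodule ℂ V) (hW : 0 < Module.finrank ℂ W) (K : Subgroup G)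
      (σ : K →* Module.End ℂ (V ⧸ W)) : ∃ T : Finset K, T.card ≤ n - Module.finrank ℂ W ∧
        Subgroup.closure (T : Set K) ⊔ σ.ker = ⊤ := by
    have hfin := W.finrank_quotient_add_finrank
    rcases Nat.eq_zero_or_pos (Module.finrank ℂ (V ⧸ W)) with h | h
    · have : Subsingleton (V ⧸ W) := Module.finrank_zero_iff.1 h
      refine ⟨∅, by simp, ?_⟩
      rw [eq_top_iff]
      exact le_sup_of_le_right fun x _ => Subsingleton.elim _ _
    · have : Nontrivial (V ⧸ W) := Module.nontrivial_of_finrank_pos h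
      obtain ⟨S, hSc, hS⟩ := ih _ (by omega) h (by omega) K (hG.to_subgroup K) (V ⧸ W) σ rfl
      obtain ⟨T, hTc, hT⟩ := exists_finset_sup_ker_eq_top σ S hS
      exact ⟨T, by omega, hT⟩
  rcases exists_eigenvector_or_triple n h0 h9 G hG V ρ hn with
    ⟨v, hv, h⟩ | ⟨N, g, v, hN, hg3, htop, hv, hli⟩
  · have hmem : v ∈ ℂ ∙ v := Submodule.mem_span_singleton_self v
    have hrank : Module.finrank ℂ (ℂ ∙ v) = 1 := finrank_span_singleton hv
    obtain ⟨χ, hχ⟩ := exists_character ρ hv h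
    have hscal (g : G) (w : V) (hw : w ∈ ℂ ∙ v) : ρ g w = χ g • w := by
      obtain ⟨a, rfl⟩ := Submodule.mem_span_singleton.1 hw
      rw [map_smul, hχ, smul_comm]
    obtain ⟨T, hTc, hT⟩ := exists_finset_sup_scalarOn_top_of_quotient hmem hv ∅
      (by rw [eq_top_iff]; exact le_sup_of_le_right fun g _ => ⟨χ g, hscal g⟩)
      (hquot _ (by omega))
    exact ⟨T, by simpa [hrank] using hTc, hT⟩
  · have hv0 : v ≠ 0 := by simpa using hli.ne_zero 0
    have hmem : v ∈ tripleSpan ρ g v :=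
      Submodule.subset_span ⟨0, by simp⟩
    have hrank : Module.finrank ℂ (tripleSpan ρ g v) = 3 := by
      rw [tripleSpan, finrank_span_eq_card hli, Fintype.card_fin]
    have hle := (tripleSpan ρ g v).finrank_le
    obtain ⟨t, ht⟩ := exists_generator_mod_scalarOn hG hN hg3 htop hv hv0
    obtain ⟨T, hTc, hT⟩ :=
      exists_finset_sup_scalarOn_top_of_quotient hmem hv0 {g, t} (by simpa using ht)
      (hquot _ (by omega))
    have := Finset.card_le_two (a := g) (b := t)
    exact ⟨T, by omega, hT⟩

theorem mem_center_of_mulVec_eq_smul {n : ℕ} {A : SpecialLinearGroup (Fin n) ℂ} {c : ℂ}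
    (hA : ∀ w : Fin n → ℂ, A.1 *ᵥ w = c • w) :
    A ∈ Subgroup.center (SpecialLinearGroup (Fin n) ℂ) := by
  have hA' : A.1 = c • (1 : Matrix (Fin n) (Fin n) ℂ) :=
    Matrix.ext_of_mulVec_single fun i => by simp only [hA, smul_mulVec, one_mulVec]
  rw [Subgroup.mem_center_iff]
  intro B
  apply Subtype.ext
  simp [hA']

theorem surjective_toPGL (n : ℕ) [NeZero n] : Function.Surjective
    (SpecialLinearGroup.toPGL : SpecialLinearGroup (Fin n) ℂ →* ProjGenLinGroup (Fin n) ℂ) := by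
  intro x
  obtain ⟨y, rfl⟩ := ProjectiveSpecialLinearGroup.isoPSLOfAlgClosedOfNonempty.symm.surjective x
  obtain ⟨A, rfl⟩ := QuotientGroup.mk_surjective y
  exact ⟨A, rfl⟩

theorem finite_comap_toPGL (n : ℕ) [NeZero n] (G : Subgroup (ProjGenLinGroup (Fin n) ℂ))
    [Finite G] : Finite (G.comap SpecialLinearGroup.toPGL) := by
  have : NeZero (max (Fintype.card (Fin n)) 1) := ⟨by simp⟩
  have : Finite (Subgroup.center (SpecialLinearGroup (Fin n) ℂ)) :=
    Finite.of_equiv _ SpecialLinearGroup.center_equiv_rootsOfUnity.toEquiv.symm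
  have hk : Finite (SpecialLinearGroup.toPGL : SpecialLinearGroup (Fin n) ℂ →* _).ker := by
    rwa [SpecialLinearGroup.toPGL_ker]
  rw [(SpecialLinearGroup.toPGL.subgroupComap G).finite_iff_finite_ker_range]
  refine ⟨Finite.of_injective (β := (SpecialLinearGroup.toPGL :
    SpecialLinearGroup (Fin n) ℂ →* _).ker)
    (fun x => ⟨x.1.1, congrArg Subtype.val (MonoidHom.mem_ker.1 x.2)⟩) ?_, inferInstance⟩
  intro x y hxy
  have h : x.1.1 = y.1.1 := congrArg (fun z => z.1) hxy
  exact Subtype.ext (Subtype.ext h)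

theorem stmt_10 (n : ℕ) (h₁ : 3 < n) (h₂ : n < 9)
    (G : Subgroup (GL (Fin n) ℂ ⧸ Subgroup.center (GL (Fin n) ℂ))) [Finite G]
    (hG : IsPGroup 3 G) : GeneratedByAtMost G (n - 1) := by
  classical
  have : NeZero n := ⟨by omega⟩
  have : Fact (Nat.Prime 3) := ⟨Nat.prime_three⟩
  let π : SpecialLinearGroup (Fin n) ℂ →* GL (Fin n) ℂ ⧸ Subgroup.center (GL (Fin n) ℂ) :=
    SpecialLinearGroup.toPGL
  have hfin : Finite (G.comap π) := @finite_comap_toPGL n _ G ‹_›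
  let f : G.comap π →* G := π.subgroupComap G
  have hf : Function.Surjective f := π.subgroupComap_surjective_of_surjective G (surjective_toPGL n)
  obtain ⟨P⟩ : Nonempty (Sylow 3 (G.comap π)) := inferInstance
  have hP : P.map f = ⊤ :=
    ((P.mapSurjective hf).3 (hG.of_equiv Subgroup.topEquiv.symm) le_top).symm
  let ρ : P →* Module.End ℂ (Fin n → ℂ) :=
    (Matrix.toLinAlgEquiv' : Matrix (Fin n) (Fin n) ℂ ≃ₐ[ℂ] _).toMonoidHom.comp
      (SpecialLinearGroup.coeMonoidHom.comp ((G.comap π).subtype.comp P.1.subtype))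
  obtain ⟨S, hSc, hS⟩ := exists_finset_sup_scalarOn_top n (by omega) h₂ P P.2 _ ρ (by simp)
  have hker : (scalarOn ρ ⊤).map (f.comp P.1.subtype) = ⊥ := by
    rw [Subgroup.map_eq_bot_iff]
    rintro g ⟨c, hc⟩
    have hg : g.1.1 ∈ Subgroup.center (SpecialLinearGroup (Fin n) ℂ) :=
      mem_center_of_mulVec_eq_smul (c := c) fun w => hc w trivial
    rw [← SpecialLinearGroup.toPGL_ker] at hg
    exact Subtype.ext hg
  refine ⟨S.image (f.comp P.1.subtype), Finset.card_image_le.trans hSc, ?_⟩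
  rw [Finset.coe_image, ← MonoidHom.map_closure, ← sup_bot_eq (Subgroup.map _ _), ← hker,
    ← Subgroup.map_sup, hS, ← Subgroup.map_map, ← MonoidHom.range_eq_map, Subgroup.range_subtype]
  exact hP
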